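/- Let n ≥ 1 and let α be an element of the Jones monoid J_n. Then α is idempotent if and only if the interface graph Γ(α) has no path component of odd length. -/

import Mathlib

open Relation

/-! ### The partition monoid and its planar submonoids -/

/-- Vertices of a partition diagram: `Sum.inl i` is the upper vertex `i`,
`Sum.inr i` is the lower vertex `i′`. -/
abbrev PV (n : ℕ) := Fin n ⊕ Fin n

/-- An element of the partition monoid `P_n`: a set partition of the `2n` vertices,
encoded as an equivalence relation (setoid). -/
abbrev PElt (n : ℕ) := Setoid (PV n)

/-- Three layers of vertices, used to form products. -/
abbrev TV (n : ℕ) := Fin n ⊕ (Fin n ⊕ Fin n)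

/-- Embedding of the vertices of the upper factor into the three layers. -/
def upEmb {n : ℕ} : PV n → TV n
  | .inl i => .inl i
  | .inr i => .inr (.inl i)

/-- Embedding of the vertices of the lower factor into the three layers. -/
def downEmb {n : ℕ} : PV n → TV n
  | .inl i => .inr (.inl i)
  | .inr i => .inr (.inr i)

/-- Embedding of the vertices of the product into the three layers. -/
def outEmb {n : ℕ} : PV n → TV n
  | .inl i => .inl i
  | .inr i => .inr (.inr i)

/-- The stacked graph of `a` on `b`: relations of `a` on layers 1–2 together with
relations of `b` on layers 2–3. -/
def stackRel {n : ℕ} (a b : PElt n) : TV n → TV n → Prop := fun x y =>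
  (∃ p q : PV n, a.r p q ∧ x = upEmb p ∧ y = upEmb q) ∨
  (∃ p q : PV n, b.r p q ∧ x = downEmb p ∧ y = downEmb q)

/-- The finest common coarsening (transitive closure) of the stacked graph. -/
def stackSetoid {n : ℕ} (a b : PElt n) : Setoid (TV n) :=
  EqvGen.setoid (stackRel a b)

/-- The product in the partition monoid: restrict the coarsening of the stacked graph
to the outer two layers. -/
def pmul {n : ℕ} (a b : PElt n) : PElt n :=
  Setoid.comap outEmb (stackSetoid a b)

/-- The identity of the partition monoid: blocks `{i, i′}`. -/
def pid (n : ℕ) : PElt n :=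
  ⟨fun x y => Sum.elim id id x = Sum.elim id id y,
    ⟨fun _ => rfl, fun h => h.symm, fun h₁ h₂ => h₁.trans h₂⟩⟩

/-- A vertex of the triple-layer graph lies in the identified middle row. -/
def isMiddle {n : ℕ} : TV n → Prop
  | .inr (.inl _) => True
  | _ => False

/-- `m(a,b)`: the number of floating components (components of the stacked graph of `a` on `b`
contained entirely in the identified middle row). -/
noncomputable def floatCount {n : ℕ} (a b : PElt n) : ℕ :=
  Nat.card {c : Quotient (stackSetoid a b) //
    ∀ x : TV n, Quotient.mk (stackSetoid a b) x = c → isMiddle x}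

/-- A block (equivalence class) is a transversal if it contains both an upper
and a lower vertex. -/
def IsTransClass {n : ℕ} (a : PElt n) (c : Quotient a) : Prop :=
  (∃ i : Fin n, Quotient.mk a (.inl i) = c) ∧ (∃ j : Fin n, Quotient.mk a (.inr j) = c)

/-- The rank of a partition: the number of transversal blocks. -/
noncomputable def prank {n : ℕ} (a : PElt n) : ℕ :=
  Nat.card {c : Quotient a // IsTransClass a c}

/-- Position of a vertex in the boundary order `1, …, n, n′, …, 1′` of the rectangle. -/
def ordIdx (n : ℕ) : PV n → ℕ
  | .inl i => i.val
  | .inr i => 2 * n - 1 - i.val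

/-- Planarity: the partition is non-crossing with respect to the boundary order
`1 < ⋯ < n < n′ < ⋯ < 1′`. -/
def IsPlanar {n : ℕ} (a : PElt n) : Prop :=
  ¬ ∃ w x y z : PV n, ordIdx n w < ordIdx n x ∧ ordIdx n x < ordIdx n y ∧
      ordIdx n y < ordIdx n z ∧ a.r w y ∧ a.r x z ∧ ¬ a.r w x

/-- The size of the block containing a given vertex. -/
noncomputable def blockCard {n : ℕ} (a : PElt n) (x : PV n) : ℕ :=
  Nat.card {y : PV n // a.r x y}

/-- The Motzkin monoid: planar partitions with all blocks of size at most 2. -/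
def Motzkin (n : ℕ) : Set (PElt n) :=
  {a | IsPlanar a ∧ ∀ x : PV n, blockCard a x ≤ 2}

/-- The Jones (Temperley–Lieb) monoid: planar partitions with all blocks of size
exactly 2. -/
def Jones (n : ℕ) : Set (PElt n) :=
  {a | IsPlanar a ∧ ∀ x : PV n, blockCard a x = 2}

/-! ### The interface graph -/

/-- Lower edge of the interface graph `Γ(a)`: a block `{i,j}` of `a` on upper vertices. -/
def LowEdge {n : ℕ} (a : PElt n) (i j : Fin n) : Prop :=
  i ≠ j ∧ a.r (.inl i) (.inl j)

/-- Upper edge of the interface graph `Γ(a)`: a block `{i′,j′}` of `a` on lower vertices. -/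
def UpEdge {n : ℕ} (a : PElt n) (i j : Fin n) : Prop :=
  i ≠ j ∧ a.r (.inr i) (.inr j)

/-- Vertex `i` of `Γ(a)` carries a lower edge. -/
def hasLow {n : ℕ} (a : PElt n) (i : Fin n) : Prop := ∃ j, LowEdge a i j

/-- Vertex `i` of `Γ(a)` carries an upper edge. -/
def hasUp {n : ℕ} (a : PElt n) (i : Fin n) : Prop := ∃ j, UpEdge a i j

/-- Vertex `i` is active downwards: the upper vertex `i` lies in a transversal of `a`. -/
def activeDown {n : ℕ} (a : PElt n) (i : Fin n) : Prop := ∃ j : Fin n, a.r (.inl i) (.inr j)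

/-- Vertex `i` is active upwards: the lower vertex `i′` lies in a transversal of `a`. -/
def activeUp {n : ℕ} (a : PElt n) (i : Fin n) : Prop := ∃ j : Fin n, a.r (.inr i) (.inl j)

/-- Vertex `i` is inert downwards: the upper vertex `i` is a singleton block of `a`. -/
def inertDown {n : ℕ} (a : PElt n) (i : Fin n) : Prop := ∀ y, a.r (.inl i) y → y = .inl i

/-- Vertex `i` is inert upwards: the lower vertex `i′` is a singleton block of `a`. -/
def inertUp {n : ℕ} (a : PElt n) (i : Fin n) : Prop := ∀ y, a.r (.inr i) y → y = .inr i

/-- Adjacency in the interface graph `Γ(a)`. -/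
def gedge {n : ℕ} (a : PElt n) (i j : Fin n) : Prop := LowEdge a i j ∨ UpEdge a i j

/-- Connectivity in the interface graph `Γ(a)`. -/
def gconn {n : ℕ} (a : PElt n) : Fin n → Fin n → Prop := EqvGen (gedge a)

/-- `θ` is (the vertex set of) a connected component of `Γ(a)`. -/
def IsComp {n : ℕ} (a : PElt n) (θ : Set (Fin n)) : Prop :=
  θ.Nonempty ∧ ∀ i ∈ θ, ∀ j : Fin n, (gconn a i j ↔ j ∈ θ)

/-- `θ` is a cycle component of `Γ(a)`: every vertex carries both a lower and an upper edge. -/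
def IsCycleComp {n : ℕ} (a : PElt n) (θ : Set (Fin n)) : Prop :=
  IsComp a θ ∧ ∀ i ∈ θ, hasLow a i ∧ hasUp a i

/-- `θ` is a path component of `Γ(a)`: some vertex misses an edge on some side. -/
def IsPathComp {n : ℕ} (a : PElt n) (θ : Set (Fin n)) : Prop :=
  IsComp a θ ∧ ∃ i ∈ θ, ¬ hasLow a i ∨ ¬ hasUp a i

/-- An inert path: every terminus is inert on its free side. -/
def IsInertPathComp {n : ℕ} (a : PElt n) (θ : Set (Fin n)) : Prop :=
  IsPathComp a θ ∧ ∀ i ∈ θ,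
    (¬ hasLow a i → inertDown a i) ∧ (¬ hasUp a i → inertUp a i)

/-- A trans-active path: even length (its two free ends lie on opposite sides) with
both termini active on their free sides. -/
def IsTransActivePathComp {n : ℕ} (a : PElt n) (θ : Set (Fin n)) : Prop :=
  IsPathComp a θ ∧
  (∃! i : Fin n, i ∈ θ ∧ ¬ hasLow a i) ∧ (∃! i : Fin n, i ∈ θ ∧ ¬ hasUp a i) ∧
  ∀ i ∈ θ, (¬ hasLow a i → activeDown a i) ∧ (¬ hasUp a i → activeUp a i)

/-- The number of edges of `Γ(a)` contained in `θ` (its length, for a component `θ`). -/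
noncomputable def compEdgeCount {n : ℕ} (a : PElt n) (θ : Set (Fin n)) : ℕ :=
  Nat.card {p : Fin n × Fin n // p.1 < p.2 ∧ p.1 ∈ θ ∧ p.2 ∈ θ ∧ LowEdge a p.1 p.2} +
  Nat.card {p : Fin n × Fin n // p.1 < p.2 ∧ p.1 ∈ θ ∧ p.2 ∈ θ ∧ UpEdge a p.1 p.2}

/-! ### The map `α ↦ α̂` and the sets `D`, `Θ(δ)` -/

/-- The 0-based position of `i` among the upward-active vertices. -/
noncomputable def posUp {n : ℕ} (a : PElt n) (i : Fin n) : ℕ :=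
  Nat.card {j : Fin n // j < i ∧ activeUp a j}

/-- The 0-based position of `i` among the downward-active vertices. -/
noncomputable def posDown {n : ℕ} (a : PElt n) (i : Fin n) : ℕ :=
  Nat.card {j : Fin n // j < i ∧ activeDown a j}

/-- `i` and `j` are consecutive upward-active vertices paired in forming `α̂`
(`i` in an even position `2t`, `j` in position `2t+1 < 2⌊r/2⌋`). -/
noncomputable def pairedUp {n : ℕ} (a : PElt n) (i j : Fin n) : Prop :=
  activeUp a i ∧ activeUp a j ∧ Even (posUp a i) ∧ posUp a j = posUp a i + 1 ∧
    posUp a j < 2 * (prank a / 2)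

/-- `i` and `j` are consecutive downward-active vertices paired in forming `α̂`. -/
noncomputable def pairedDown {n : ℕ} (a : PElt n) (i j : Fin n) : Prop :=
  activeDown a i ∧ activeDown a j ∧ Even (posDown a i) ∧ posDown a j = posDown a i + 1 ∧
    posDown a j < 2 * (prank a / 2)

/-- The transversal relations removed in forming `α̂` (those of the first `2⌊r/2⌋`
transversals). -/
noncomputable def removedTrans {n : ℕ} (a : PElt n) (x y : PV n) : Prop :=
  ∃ i j : Fin n, a.r (.inl i) (.inr j) ∧ posDown a i < 2 * (prank a / 2) ∧
    ((x = .inl i ∧ y = .inr j) ∨ (x = .inr j ∧ y = .inl i))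

/-- The generating relation of `α̂`: the relations of `α` minus the removed transversals,
plus the new blocks pairing consecutive active vertices. -/
noncomputable def hatRel {n : ℕ} (a : PElt n) (x y : PV n) : Prop :=
  (a.r x y ∧ ¬ removedTrans a x y) ∨
  (∃ i j : Fin n, pairedUp a i j ∧
      ((x = .inr i ∧ y = .inr j) ∨ (x = .inr j ∧ y = .inr i))) ∨
  (∃ i j : Fin n, pairedDown a i j ∧
      ((x = .inl i ∧ y = .inl j) ∨ (x = .inl j ∧ y = .inl i)))

/-- The element `α̂` obtained from `α` by pairing off consecutive active vertices. -/
noncomputable def hat {n : ℕ} (a : PElt n) : PElt n := EqvGen.setoid (hatRel a)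

/-- The idempotents of a subset `S` (with respect to the partition product). -/
def Eset {n : ℕ} (S : Set (PElt n)) : Set (PElt n) := {a ∈ S | pmul a a = a}

/-- `D(S) = D₀ ∪ E(D₁)`: the idempotents of `S` of rank at most 1. -/
def Dset {n : ℕ} (S : Set (PElt n)) : Set (PElt n) :=
  {d ∈ S | pmul d d = d ∧ prank d ≤ 1}

/-- `θ` lies (entirely) to the left of the leftmost transversal of `a`. -/
def LeftOfTrans {n : ℕ} (a : PElt n) (θ : Set (Fin n)) : Prop :=
  ∀ i ∈ θ, ∀ j : Fin n, activeDown a j ∨ activeUp a j → i < j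

/-- `Θ(a)`: the cycle components of `Γ(a)` lying entirely to the left of the leftmost
transversal. -/
def ThetaSet {n : ℕ} (a : PElt n) : Set (Set (Fin n)) :=
  {θ | IsCycleComp a θ ∧ LeftOfTrans a θ}

/-! ### Returns, special pairs and `θ`-covers -/

/-- The block `{i,j}` of `a` on upper vertices is an upper return: no upper block
`{k,l}` has `k<i<j<l`, and no transversal contains an upper vertex smaller than `i`. -/
def UpperReturn {n : ℕ} (a : PElt n) (i j : Fin n) : Prop :=
  i < j ∧ a.r (.inl i) (.inl j) ∧
  (¬ ∃ k l : Fin n, k < i ∧ j < l ∧ a.r (.inl k) (.inl l)) ∧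
  (¬ ∃ k : Fin n, k < i ∧ activeDown a k)

/-- The block `{i′,j′}` of `a` on lower vertices is a lower return. -/
def LowerReturn {n : ℕ} (a : PElt n) (i j : Fin n) : Prop :=
  i < j ∧ a.r (.inr i) (.inr j) ∧
  (¬ ∃ k l : Fin n, k < i ∧ j < l ∧ a.r (.inr k) (.inr l)) ∧
  (¬ ∃ k : Fin n, k < i ∧ activeUp a k)

/-- The interface-graph adjacency of `a` after deleting the lower-vertex block `{i′,j′}`
and the upper-vertex block `{k,l}`. -/
def redEdge {n : ℕ} (a : PElt n) (i j k l : Fin n) (u v : Fin n) : Prop :=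
  (LowEdge a u v ∧ ({u, v} : Set (Fin n)) ≠ {k, l}) ∨
  (UpEdge a u v ∧ ({u, v} : Set (Fin n)) ≠ {i, j})

/-- The relation generating the `θ`-cover `a − (e′,f)`, for `e′ = {i′,j′}` and
`f = {k,l}`: delete the two blocks, and join each freed upper vertex to the freed lower
vertex reached along its path. -/
def coverRel {n : ℕ} (a : PElt n) (i j k l : Fin n) (x y : PV n) : Prop :=
  (a.r x y ∧ ({x, y} : Set (PV n)) ≠ {.inl k, .inl l} ∧
    ({x, y} : Set (PV n)) ≠ {.inr i, .inr j}) ∨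
  (∃ u v : Fin n, u ∈ ({k, l} : Set (Fin n)) ∧ v ∈ ({i, j} : Set (Fin n)) ∧
    EqvGen (redEdge a i j k l) u v ∧
    ((x = .inl u ∧ y = .inr v) ∨ (x = .inr v ∧ y = .inl u)))

/-- The `θ`-cover `a − (e′,f)` as a partition. -/
def coverElt {n : ℕ} (a : PElt n) (i j k l : Fin n) : PElt n :=
  EqvGen.setoid (coverRel a i j k l)

/-- `b` is a `θ`-cover of `a`: `θ ∈ Θ(a)` and `b = a − (e′,f)` for some special pair
`(e′,f)` over `θ` (one lower-return and one upper-return edge of `θ`). -/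
def IsThetaCover {n : ℕ} (a : PElt n) (θ : Set (Fin n)) (b : PElt n) : Prop :=
  θ ∈ ThetaSet a ∧
  ∃ i j k l : Fin n, i ∈ θ ∧ j ∈ θ ∧ k ∈ θ ∧ l ∈ θ ∧
    LowerReturn a i j ∧ UpperReturn a k l ∧ b = coverElt a i j k l

/-- `a ≪_d b`: `a = b` or there is a chain of `θ`-covers from `a` to `b` along pairwise
distinct cycles `θ ∈ Θ(d)`. -/
def llRel {n : ℕ} (d : PElt n) (a b : PElt n) : Prop :=
  a = b ∨ ∃ (h : ℕ) (θs : Fin h → Set (Fin n)) (as : Fin (h + 1) → PElt n),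
    Function.Injective θs ∧ (∀ ι, θs ι ∈ ThetaSet d) ∧
    as 0 = a ∧ as (Fin.last h) = b ∧
    ∀ ι : Fin h, IsThetaCover (as ι.castSucc) (θs ι) (as ι.succ)

/-- The fibre `F_d = {α ∈ E(S) : α̂ = d}`. -/
def Fib {n : ℕ} (S : Set (PElt n)) (d : PElt n) : Set (PElt n) :=
  {a ∈ Eset S | hat a = d}

/-- `C_d(θ) = C*_d(θ) ∪ {d}`, where `C*_d(θ)` is the set of `θ`-covers of `d`. -/
def CoverSet {n : ℕ} (d : PElt n) (θ : Set (Fin n)) : Set (PElt n) :=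
  insert d {b | IsThetaCover d θ b}

/-- `u_θ`: the number of upper-return blocks among the edges of `θ`. -/
noncomputable def uRet {n : ℕ} (a : PElt n) (θ : Set (Fin n)) : ℕ :=
  Nat.card {p : Fin n × Fin n // p.1 ∈ θ ∧ p.2 ∈ θ ∧ UpperReturn a p.1 p.2}

/-- `l_θ`: the number of lower-return blocks among the edges of `θ`. -/
noncomputable def lRet {n : ℕ} (a : PElt n) (θ : Set (Fin n)) : ℕ :=
  Nat.card {p : Fin n × Fin n // p.1 ∈ θ ∧ p.2 ∈ θ ∧ LowerReturn a p.1 p.2}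

/-! ### Twisted semigroup algebras -/

variable {K : Type} [Field K]

/-- The underlying vector space of the semigroup algebra `k[P_n]`. -/
abbrev PAlg (n : ℕ) (K : Type) [Field K] := PElt n →₀ K

/-- The twisted multiplication on `k[P_n]`: on basis elements,
`a ∘ b = ξ^{m(a,b)} · (ab)`, extended bilinearly. -/
noncomputable def twistMul {n : ℕ} (ξ : K) (f g : PAlg n K) : PAlg n K :=
  f.sum fun a ca => g.sum fun b cb =>
    Finsupp.single (pmul a b) (ca * cb * ξ ^ floatCount a b)

/-- The twisted variant `S^ξ`: the subsemigroup of `(k[S], ∘)` generated by (the basis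
elements corresponding to) `S`. -/
def TwistedVariant {n : ℕ} (ξ : K) (S : Set (PElt n)) : Set (PAlg n K) :=
  ⋂₀ {T : Set (PAlg n K) | (∀ a ∈ S, Finsupp.single a (1 : K) ∈ T) ∧
      ∀ f ∈ T, ∀ g ∈ T, twistMul ξ f g ∈ T}

/-- The idempotents of a set of elements of the twisted algebra. -/
def EsetTwist {n : ℕ} (ξ : K) (X : Set (PAlg n K)) : Set (PAlg n K) :=
  {f ∈ X | twistMul ξ f f = f}

/-- `⟨S^ξ, ξ·1⟩ = {ξ^i·α : i ∈ ℕ, α ∈ S}`. -/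
def TwistNat {n : ℕ} (ξ : K) (S : Set (PElt n)) : Set (PAlg n K) :=
  {f | ∃ (i : ℕ), ∃ a ∈ S, f = Finsupp.single a (ξ ^ i)}

/-- `⟨S^ξ, ξ·1, ξ⁻¹·1⟩ = {ξ^i·α : i ∈ ℤ, α ∈ S}`. -/
def TwistInt {n : ℕ} (ξ : K) (S : Set (PElt n)) : Set (PAlg n K) :=
  {f | ∃ (i : ℤ), ∃ a ∈ S, f = Finsupp.single a (ξ ^ i)}

/-! ### Idempotent statistics of the Jones monoid -/

/-- The number of cycle components of `Γ(a)`. -/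
noncomputable def numCycles {n : ℕ} (a : PElt n) : ℕ :=
  Nat.card {θ : Set (Fin n) // IsCycleComp a θ}

/-- The number of path components of `Γ(a)`. -/
noncomputable def numPaths {n : ℕ} (a : PElt n) : ℕ :=
  Nat.card {θ : Set (Fin n) // IsPathComp a θ}

/-- `E_{n;c,p}`: the idempotents of the Jones monoid `J_n` with `c` cycle components and
`p` path components (out-of-range indices give the empty set). -/
def EJcp (n : ℕ) (c p : ℤ) : Set (PElt n) :=
  {a ∈ Jones n | pmul a a = a ∧ (numCycles a : ℤ) = c ∧ (numPaths a : ℤ) = p}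

/-- `e_{n;c,p} = |E_{n;c,p}|`. -/
noncomputable def eJ (n : ℕ) (c p : ℤ) : ℕ := Nat.card (EJcp n c p)

/-- `e_{n;·,p} = Σ_c e_{n;c,p}`: the number of idempotents of `J_n` of rank `p`. -/
noncomputable def eJdot (n : ℕ) (p : ℤ) : ℕ :=
  Nat.card {a : PElt n | a ∈ Jones n ∧ pmul a a = a ∧ (numPaths a : ℤ) = p}

/-- `S^{(1)}_{n;c,p} = Σ_{α ∈ E_{n;c,p}} Σ_{θ ∈ Θ(α)} (u_θ + l_θ)`. -/
noncomputable def S1 (n : ℕ) (c p : ℤ) : ℕ :=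
  ∑ᶠ a ∈ EJcp n c p, ∑ᶠ θ ∈ ThetaSet a, (uRet a θ + lRet a θ)

/-- `S^{(2)}_{n;c,p} = Σ_{α ∈ E_{n;c,p}} Σ_{θ₁ ≠ θ₂ ∈ Θ(α)} u_{θ₁}·l_{θ₂}`
(the inner sum over ordered pairs of distinct cycles). -/
noncomputable def S2 (n : ℕ) (c p : ℤ) : ℕ :=
  ∑ᶠ a ∈ EJcp n c p, ∑ᶠ q ∈ {q : Set (Fin n) × Set (Fin n) |
      q.1 ∈ ThetaSet a ∧ q.2 ∈ ThetaSet a ∧ q.1 ≠ q.2}, uRet a q.1 * lRet a q.2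

/-- `S^{(1)}_{n;·,p}`. -/
noncomputable def S1dot (n : ℕ) (p : ℤ) : ℕ :=
  ∑ᶠ a ∈ {a : PElt n | a ∈ Jones n ∧ pmul a a = a ∧ (numPaths a : ℤ) = p},
    ∑ᶠ θ ∈ ThetaSet a, (uRet a θ + lRet a θ)

/-- `S^{(2)}_{n;·,p}`. -/
noncomputable def S2dot (n : ℕ) (p : ℤ) : ℕ :=
  ∑ᶠ a ∈ {a : PElt n | a ∈ Jones n ∧ pmul a a = a ∧ (numPaths a : ℤ) = p},
    ∑ᶠ q ∈ {q : Set (Fin n) × Set (Fin n) |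
      q.1 ∈ ThetaSet a ∧ q.2 ∈ ThetaSet a ∧ q.1 ≠ q.2}, uRet a q.1 * lRet a q.2

/-!
The blocks inside either row of a Jones diagram form a noncrossing matching, and `Γ(α)` is the union
of the two matchings. A path component has exactly two free ends, which lie on opposite sides if and
only if its length is even, and at every free end a transversal is attached.

In the stack of `α` on `α`, all transversals attached to one component of `Γ(α)` are joined. So
distinct blocks of `α` stay apart in `α²` if and only if transversals attached to the same component
coincide. An odd path has two free ends on one side, which lie in different blocks.

Conversely, let all paths be even. An arc of either matching that is not part of a given path
encloses an even number of its vertices, so the parity of the number of these to the left of `v` is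
the same for all vertices `v` of another component. This parity tells which of two paths is further
left, at their lower ends as well as at their upper ends, so the paths match the free vertices of
the two rows monotonically. So do the transversals, by planarity. Composing the two gives a strictly
monotone self-map of a finite chain, which is the identity: every path joins the two ends of one
transversal.
-/

/-! ### Noncrossing matchings of a line -/

section Involutions

open Set Function

variable {V : Type*}

theorem two_mul_ncard_lt_apply_add_ncard_fixed [Finite V] [LinearOrder V] {s : V → V}
    (hs : Involutive s) {S : Set V} (hS : MapsTo s S S) :
    2 * {x ∈ S | x < s x}.ncard + {x ∈ S | s x = x}.ncard = S.ncard := by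
  have image_lt : s '' {x ∈ S | x < s x} = {x ∈ S | s x < x} := by
    ext y
    refine ⟨?_, fun hy => ⟨s y, ⟨hS hy.1, (hs y).symm ▸ hy.2⟩, hs y⟩⟩
    rintro ⟨x, hx, rfl⟩
    exact ⟨hS hx.1, (hs x).symm ▸ hx.2⟩
  have ncard_gt : {x ∈ S | s x < x}.ncard = {x ∈ S | x < s x}.ncard := by
    rw [← image_lt, ncard_image_of_injective _ hs.injective]
  have union_eq : {x ∈ S | x < s x} ∪ {x ∈ S | s x < x} ∪ {x ∈ S | s x = x} = S := by
    ext x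
    have := lt_trichotomy x (s x)
    simp only [mem_union, mem_ofPred_eq]
    tauto
  conv_rhs => rw [← union_eq]
  rw [ncard_union_eq, ncard_union_eq, ncard_gt, two_mul]
  · exact disjoint_left.2 fun x hx hx' => hx.2.asymm hx'.2
  · rw [disjoint_left]
    rintro x (hx | hx) hx'
    exacts [hx.2.ne' hx'.2, hx.2.ne hx'.2]

/-- A noncrossing matching on a line, encoded as a map exchanging matched points and fixing the
unmatched ones: the points below an arc are matched among themselves. -/
def IsNoncrossing [LinearOrder V] (s : V → V) : Prop :=
  ∀ v, ∀ p ∈ Ioo v (s v), s p ∈ Ioo v (s v) ∧ s p ≠ p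

/-- For the vertex set `P` of a path drawn in the plane across the line, the parity of the number
of points of `P` to the left of `v` tells on which side of the path `v` lies. By convention no point
of `P` is to the right of `P`. -/
def RightOf [LinearOrder V] (P : Set V) (v : V) : Prop :=
  v ∉ P ∧ Odd (P ∩ Iio v).ncard

section Noncrossing

variable [LinearOrder V] {s : V → V} {P : Set V}

theorem IsNoncrossing.mapsTo_Iio (hnc : IsNoncrossing s) (hs : Involutive s) {v : V}
    (hv : s v = v) : MapsTo s (Iio v) (Iio v) := by
  intro p hp
  rcases lt_trichotomy (s p) v with h | h | h
  · exact h
  · exact absurd (hs.injective (h.trans hv.symm)) (ne_of_lt hp)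
  · exact absurd hv (hnc p v ⟨hp, h⟩).2

theorem IsNoncrossing.even_ncard_inter_Ioo [Finite V] (hnc : IsNoncrossing s) (hs : Involutive s)
    (hP : MapsTo s P P) (v : V) : Even (P ∩ Ioo v (s v)).ncard := by
  have hcount := two_mul_ncard_lt_apply_add_ncard_fixed hs
    (hP.inter_inter fun p hp => (hnc v p hp).1)
  have hfixed : {x ∈ P ∩ Ioo v (s v) | s x = x} = ∅ :=
    eq_empty_of_forall_notMem fun x hx => (hnc v x hx.1.2).2 hx.2
  rw [hfixed, ncard_empty, add_zero] at hcount
  exact hcount ▸ even_two_mul _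

theorem IsNoncrossing.rightOf_apply_iff [Finite V] (hnc : IsNoncrossing s) (hs : Involutive s)
    (hP : MapsTo s P P) (v : V) : RightOf P (s v) ↔ RightOf P v := by
  wlog hv : v ≤ s v generalizing v
  · rw [← this (s v) ((hs v).symm ▸ (not_le.1 hv).le), hs v]
  have hmem : s v ∈ P ↔ v ∈ P := ⟨fun h => hs v ▸ hP h, fun h => hP h⟩
  refine and_congr_right_iff.2 ?_ |>.trans (and_congr_left' hmem.not)
  intro hsv
  have hsplit : P ∩ Iio (s v) = P ∩ Iio v ∪ P ∩ Ioo v (s v) := by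
    have hvP : v ∉ P := hmem.not.1 hsv
    ext x
    have : x ∈ P → x ≠ v := fun hx h => hvP (h ▸ hx)
    grind
  have hdisj : Disjoint (P ∩ Iio v) (P ∩ Ioo v (s v)) :=
    disjoint_left.2 fun x hx hx' => lt_asymm hx.2 hx'.2.1
  rw [hsplit, ncard_union_eq hdisj, Nat.odd_add,
    iff_true_right (hnc.even_ncard_inter_Ioo hs hP v)]

theorem IsNoncrossing.rightOf_iff_lt [Finite V] (hnc : IsNoncrossing s) (hs : Involutive s)
    (hP : MapsTo s P P) {i v : V} (hi : {x ∈ P | s x = x} = {i}) (hv : s v = v) :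
    RightOf P v ↔ i < v := by
  by_cases hvP : v ∈ P
  · obtain rfl : v = i := hi.subset ⟨hvP, hv⟩
    simp [RightOf, hvP]
  have hcount := two_mul_ncard_lt_apply_add_ncard_fixed hs
    (hP.inter_inter (hnc.mapsTo_Iio hs hv))
  have hfixed : {x ∈ P ∩ Iio v | s x = x} = {i} ∩ Iio v := by
    ext x
    rw [← hi]
    simp only [mem_ofPred_eq, mem_inter_iff]
    tauto
  rw [RightOf, and_iff_right hvP, ← hcount, hfixed, Nat.odd_add', iff_true_right (even_two_mul _)]
  by_cases hiv : i < v <;> simp [hiv]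

end Noncrossing

theorem ncard_fixed_add_ncard_fixed_le_two [Finite V] {G : SimpleGraph V}
    (hG : G.Connected) {s t : V → V} (hs : Involutive s) (ht : Involutive t)
    (hst : ∀ x y, G.Adj x y → s x = y ∨ t x = y) :
    {x | s x = x}.ncard + {x | t x = x}.ncard ≤ 2 := by
  classical
  let _ : LinearOrder V := linearOrderOfSTO WellOrderingRel
  have edges_subset : G.edgeSet ⊆
      (fun x => s(x, s x)) '' {x | x < s x} ∪ (fun x => s(x, t x)) '' {x | x < t x} := by
    refine fun e => Sym2.ind (fun x y (hxy : G.Adj x y) => ?_) e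
    wlog hlt : x < y generalizing x y
    · exact Sym2.eq_swap ▸ this y x hxy.symm (hxy.ne.lt_or_gt.resolve_left hlt)
    rcases hst x y hxy with rfl | rfl
    exacts [Or.inl ⟨x, hlt, rfl⟩, Or.inr ⟨x, hlt, rfl⟩]
  have edges_le : G.edgeSet.ncard ≤ {x | x < s x}.ncard + {x | x < t x}.ncard :=
    (ncard_le_ncard edges_subset).trans <| (ncard_union_le _ _).trans <|
      add_le_add ncard_image_le ncard_image_le
  have vertices_le : Nat.card V ≤ G.edgeSet.ncard + 1 := hG.card_vert_le_card_edgeSet_add_one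
  have count_s := two_mul_ncard_lt_apply_add_ncard_fixed hs (mapsTo_univ s univ)
  have count_t := two_mul_ncard_lt_apply_add_ncard_fixed ht (mapsTo_univ t univ)
  simp only [mem_univ, true_and, ncard_univ] at count_s count_t
  omega

theorem ncard_fixed_add_ncard_fixed_le_two_of_induce [Finite V] {G : SimpleGraph V}
    {C : Set V} (hG : (G.induce C).Connected) {s t : V → V}
    (hs : Involutive s) (ht : Involutive t) (hsC : MapsTo s C C) (htC : MapsTo t C C)
    (hst : ∀ x y, G.Adj x y → s x = y ∨ t x = y) :
    {x ∈ C | s x = x}.ncard + {x ∈ C | t x = x}.ncard ≤ 2 := by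
  have involutive_restrict {u : V → V} (hu : Involutive u) (huC : MapsTo u C C) :
      Involutive (huC.restrict u C C) := fun x => Subtype.ext (hu x)
  have ncard_restrict {u : V → V} (huC : MapsTo u C C) :
      {x | huC.restrict u C C x = x}.ncard = {x ∈ C | u x = x}.ncard := by
    rw [← ncard_image_of_injective _ Subtype.val_injective]
    congr 1
    ext x
    simp [Subtype.ext_iff, and_comm]
  rw [← ncard_restrict hsC, ← ncard_restrict htC]
  refine ncard_fixed_add_ncard_fixed_le_two hG (involutive_restrict hs hsC)
    (involutive_restrict ht htC) fun x y hxy => ?_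
  exact (hst x y hxy).imp Subtype.ext Subtype.ext

end Involutions

theorem eq_of_lt_iff_lt {α : Type*} [LinearOrder α] [Finite α] {R : α → α → Prop}
    (total : ∀ x, ∃ y, R x y)
    (lt_iff_lt : ∀ {x y x' y'}, R x y → R x' y' → (x < x' ↔ y < y')) {x y : α} (h : R x y) :
    x = y := by
  choose f hf using total
  have hmono : StrictMono f := fun x x' hx => (lt_iff_lt (hf x) (hf x')).1 hx
  have hfx : f x = x := le_antisymm hmono.apply_le hmono.le_apply
  have hyx : ¬ f x < y := (lt_iff_lt (hf x) h).not.1 (lt_irrefl x)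
  have hxy : ¬ y < f x := (lt_iff_lt h (hf x)).not.1 (lt_irrefl x)
  rw [← hfx]
  exact le_antisymm (not_lt.1 hxy) (not_lt.1 hyx)

/-! ### Edges and ends in the interface graph -/

section Diagrams

open Set Function SimpleGraph

variable {n : ℕ} {a : PElt n}

/-- The reflection of a partition diagram in its horizontal axis. It exchanges the lower and the
upper edges of the interface graph. -/
abbrev reflect (a : PElt n) : PElt n := Setoid.comap Sum.swap a

theorem ordIdx_injective : Injective (ordIdx n) := by
  rintro (i | i) (j | j) h <;> simp only [ordIdx] at h <;>
    simp only [Sum.inl.injEq, Sum.inr.injEq, reduceCtorEq] <;> omega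

theorem ordIdx_swap_lt_iff {x y : PV n} :
    ordIdx n x.swap < ordIdx n y.swap ↔ ordIdx n y < ordIdx n x := by
  rcases x with i | i <;> rcases y with j | j <;>
    simp only [ordIdx, Sum.swap_inl, Sum.swap_inr] <;> omega

theorem IsPlanar.reflect (ha : IsPlanar a) : IsPlanar (reflect a) := by
  rintro ⟨w, x, y, z, hwx, hxy, hyz, hwy, hxz, hwx'⟩
  have hzy : ¬ a.r z.swap y.swap := fun h =>
    hwx' (a.trans (a.trans hwy (a.symm h)) (a.symm hxz))
  exact ha ⟨z.swap, y.swap, x.swap, w.swap, ordIdx_swap_lt_iff.2 hyz, ordIdx_swap_lt_iff.2 hxy,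
    ordIdx_swap_lt_iff.2 hwx, a.symm hxz, a.symm hwy, hzy⟩

theorem blockCard_reflect (x : PV n) : blockCard (reflect a) x = blockCard a x.swap :=
  Nat.card_congr ((Equiv.sumComm _ _).subtypeEquiv fun _ => Iff.rfl)

theorem reflect_mem_Jones (ha : a ∈ Jones n) : reflect a ∈ Jones n :=
  ⟨ha.1.reflect, fun x => (blockCard_reflect x).trans (ha.2 _)⟩

theorem eq_of_rel_of_blockCard_le_two {x y z : PV n} (hx : blockCard a x ≤ 2) (hxy : a.r x y)
    (hxz : a.r x z) (hy : y ≠ x) (hz : z ≠ x) : y = z := by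
  by_contra hyz
  exact hx.not_gt <| (two_lt_ncard_iff (toFinite {y | a.r x y})).2
    ⟨x, y, z, a.refl x, hxy, hxz, hy.symm, hz.symm, hyz⟩

theorem exists_ne_rel_of_mem_Jones (ha : a ∈ Jones n) (x : PV n) : ∃ y, y ≠ x ∧ a.r x y := by
  have hcard : 1 < {y | a.r x y}.ncard := one_lt_two.trans_eq (ha.2 x).symm
  obtain ⟨y, hy, hne⟩ := exists_ne_of_one_lt_ncard hcard x
  exact ⟨y, hne, hy⟩

theorem eq_of_rel_of_mem_Jones (ha : a ∈ Jones n) {x y z : PV n} (hxy : a.r x y)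
    (hxz : a.r x z) (hy : y ≠ x) (hz : z ≠ x) : y = z :=
  eq_of_rel_of_blockCard_le_two (ha.2 x).le hxy hxz hy hz

theorem not_crossing_of_mem_Jones (ha : a ∈ Jones n) {w x y z : PV n}
    (hwx : ordIdx n w < ordIdx n x) (hxy : ordIdx n x < ordIdx n y)
    (hyz : ordIdx n y < ordIdx n z) (hwy : a.r w y) : ¬ a.r x z := by
  intro hxz
  refine ha.1 ⟨w, x, y, z, hwx, hxy, hyz, hwy, hxz, fun h => ?_⟩
  have : x = y := eq_of_rel_of_mem_Jones ha h hwy (ne_of_apply_ne _ hwx.ne')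
    (ne_of_apply_ne _ (hwx.trans hxy).ne')
  exact hxy.ne (congrArg _ this)

theorem exists_ne_rel_between_of_mem_Jones (ha : a ∈ Jones n) {x y p : PV n} (hxy : a.r x y)
    (hxp : ordIdx n x < ordIdx n p) (hpy : ordIdx n p < ordIdx n y) :
    ∃ q, q ≠ p ∧ a.r p q ∧ ordIdx n x < ordIdx n q ∧ ordIdx n q < ordIdx n y := by
  have hp : ¬ a.r x p := fun h => hpy.ne <| congrArg _ <| eq_of_rel_of_mem_Jones ha h hxy
    (ne_of_apply_ne _ hxp.ne') (ne_of_apply_ne _ (hxp.trans hpy).ne')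
  obtain ⟨q, hqp, hpq⟩ := exists_ne_rel_of_mem_Jones ha p
  refine ⟨q, hqp, hpq, ?_, ?_⟩
  · by_contra! hqx
    rcases hqx.eq_or_lt with h | h
    · exact hp (ordIdx_injective h ▸ a.symm hpq)
    · exact not_crossing_of_mem_Jones ha h hxp hpy (a.symm hpq) hxy
  · by_contra! hyq
    rcases hyq.eq_or_lt with h | h
    · exact hp (a.trans hxy (ordIdx_injective h ▸ a.symm hpq))
    · exact not_crossing_of_mem_Jones ha hxp hpy h hxy hpq

theorem lt_of_transversal_of_mem_Jones (ha : a ∈ Jones n) {i i' j j' : Fin n}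
    (hij : a.r (.inl i) (.inr j)) (hij' : a.r (.inl i') (.inr j')) (hi : i < i') : j < j' := by
  by_contra! hj
  have hi' : i'.val < 2 * n - 1 - j.val := by omega
  rcases hj.eq_or_lt with rfl | hj
  · have : Sum.inl i' = (Sum.inr j' : PV n) := eq_of_rel_of_mem_Jones ha
      (a.trans hij (a.symm hij')) hij (by simpa using hi.ne') (by simp)
    simp at this
  · exact not_crossing_of_mem_Jones ha (w := .inl i) (x := .inl i') (y := .inr j) hi hi'
      (by simp only [ordIdx]; omega) hij hij'

theorem transversal_lt_iff_lt_of_mem_Jones (ha : a ∈ Jones n) {i i' j j' : Fin n}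
    (hij : a.r (.inl i) (.inr j)) (hij' : a.r (.inl i') (.inr j')) : i < i' ↔ j < j' :=
  ⟨lt_of_transversal_of_mem_Jones ha hij hij', lt_of_transversal_of_mem_Jones
    (reflect_mem_Jones ha) (i := j) (i' := j') (a.symm hij) (a.symm hij')⟩

theorem activeDown_iff_not_hasLow_of_mem_Jones (ha : a ∈ Jones n) {i : Fin n} :
    activeDown a i ↔ ¬ hasLow a i := by
  constructor
  · rintro ⟨j, hj⟩ ⟨k, hne, hk⟩
    have : Sum.inr j = (Sum.inl k : PV n) :=
      eq_of_rel_of_mem_Jones ha hj hk (by simp) (by simpa using hne.symm)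
    simp at this
  · intro hi
    obtain ⟨j | j, hne, hj⟩ := exists_ne_rel_of_mem_Jones ha (.inl i)
    · exact absurd ⟨j, fun h => hne (h ▸ rfl), hj⟩ hi
    · exact ⟨j, hj⟩

theorem activeUp_iff_not_hasUp_of_mem_Jones (ha : a ∈ Jones n) {i : Fin n} :
    activeUp a i ↔ ¬ hasUp a i :=
  activeDown_iff_not_hasLow_of_mem_Jones (reflect_mem_Jones ha)

open Classical in
/-- The other end of the lower edge of `Γ(a)` at `i`, and `i` itself if there is no such edge;
an involution when the blocks of `a` have at most two elements. -/
noncomputable def lowPartner (a : PElt n) (i : Fin n) : Fin n :=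
  if h : hasLow a i then h.choose else i

/-- The analogue of `lowPartner` for the upper edges of `Γ(a)`. -/
noncomputable def upPartner (a : PElt n) : Fin n → Fin n := lowPartner (reflect a)

theorem hasLow.lowEdge_lowPartner {i : Fin n} (h : hasLow a i) :
    LowEdge a i (lowPartner a i) := by
  rw [lowPartner, dif_pos h]
  exact h.choose_spec

theorem lowPartner_eq_self_iff {i : Fin n} : lowPartner a i = i ↔ ¬ hasLow a i :=
  ⟨fun hi h => h.lowEdge_lowPartner.1 hi.symm, fun h => dif_neg h⟩

theorem upPartner_eq_self_iff {i : Fin n} : upPartner a i = i ↔ ¬ hasUp a i :=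
  lowPartner_eq_self_iff

section BlocksOfSizeTwo

variable (ha : ∀ x, blockCard a x ≤ 2)
include ha

theorem blockCard_reflect_le_two (x : PV n) : blockCard (reflect a) x ≤ 2 :=
  (blockCard_reflect x).trans_le (ha _)

theorem lowPartner_eq_iff_lowEdge {i j : Fin n} (hij : i ≠ j) :
    lowPartner a i = j ↔ LowEdge a i j := by
  constructor
  · rintro rfl
    refine hasLow.lowEdge_lowPartner ?_
    by_contra h
    exact hij (lowPartner_eq_self_iff.2 h).symm
  · intro h
    obtain ⟨hne, hrel⟩ := hasLow.lowEdge_lowPartner ⟨j, h⟩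
    exact Sum.inl_injective <| eq_of_rel_of_blockCard_le_two (ha _) hrel h.2
      (by simpa using hne.symm) (by simpa using hij.symm)

theorem lowPartner_involutive : Involutive (lowPartner a) := by
  intro i
  by_cases h : hasLow a i
  · obtain ⟨hne, hrel⟩ := h.lowEdge_lowPartner
    exact (lowPartner_eq_iff_lowEdge ha hne.symm).2 ⟨hne.symm, a.symm hrel⟩
  · rw [lowPartner_eq_self_iff.2 h, lowPartner_eq_self_iff.2 h]

theorem upPartner_involutive : Involutive (upPartner a) :=
  lowPartner_involutive (blockCard_reflect_le_two ha)

theorem partner_eq_of_gedge {i j : Fin n} (h : gedge a i j) :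
    lowPartner a i = j ∨ upPartner a i = j :=
  h.imp (fun h => (lowPartner_eq_iff_lowEdge ha h.1).2 h)
    (fun h => (lowPartner_eq_iff_lowEdge (blockCard_reflect_le_two ha) h.1).2 h)

end BlocksOfSizeTwo

theorem isNoncrossing_lowPartner_of_mem_Jones (ha : a ∈ Jones n) :
    IsNoncrossing (lowPartner a) := by
  rintro v p ⟨hvp, hpv⟩
  have hcard (x : PV n) : blockCard a x ≤ 2 := (ha.2 x).le
  have harc : LowEdge a v (lowPartner a v) :=
    (lowPartner_eq_iff_lowEdge hcard (hvp.trans hpv).ne).1 rfl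
  obtain ⟨q | q, hqp, hpq, hvq, hqv⟩ :=
    exists_ne_rel_between_of_mem_Jones ha (p := .inl p) harc.2 hvp hpv
  · have hne : p ≠ q := fun h => hqp (h ▸ rfl)
    rw [(lowPartner_eq_iff_lowEdge hcard hne).2 ⟨hne, hpq⟩]
    exact ⟨⟨hvq, hqv⟩, hne.symm⟩
  · simp only [ordIdx] at hqv
    omega

theorem isNoncrossing_upPartner_of_mem_Jones (ha : a ∈ Jones n) : IsNoncrossing (upPartner a) :=
  isNoncrossing_lowPartner_of_mem_Jones (reflect_mem_Jones ha)

/-- The interface graph `Γ(a)` as a simple graph. -/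
def interfaceGraph (a : PElt n) : SimpleGraph (Fin n) where
  Adj := gedge a
  symm.symm _ _ h := h.imp (fun h => ⟨h.1.symm, a.symm h.2⟩) (fun h => ⟨h.1.symm, a.symm h.2⟩)
  loopless.irrefl _ h := h.elim (fun h => h.1 rfl) (fun h => h.1 rfl)

theorem gconn_iff_reachable {i j : Fin n} : gconn a i j ↔ (interfaceGraph a).Reachable i j := by
  have : Std.Symm (gedge a) := (interfaceGraph a).symm
  rw [gconn, EqvGen.eqvGen_eq_reflTransGen, reachable_iff_reflTransGen]
  rfl

theorem IsComp.connected_induce {θ : Set (Fin n)} (hθ : IsComp a θ) :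
    ((interfaceGraph a).induce θ).Connected := by
  obtain ⟨i, hi⟩ := hθ.1
  have hsupp : θ = ((interfaceGraph a).connectedComponentMk i).supp := by
    ext j
    rw [ConnectedComponent.mem_supp_iff, ConnectedComponent.eq, reachable_comm,
      ← gconn_iff_reachable, hθ.2 i hi]
  rw [hsupp]
  exact (ConnectedComponent.maximal_connected_induce_supp _).prop

theorem IsComp.mapsTo_lowPartner {θ : Set (Fin n)} (hθ : IsComp a θ) :
    MapsTo (lowPartner a) θ θ := by
  intro i hi
  by_cases h : hasLow a i
  · exact (hθ.2 i hi _).1 (.rel _ _ (.inl h.lowEdge_lowPartner))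
  · rwa [lowPartner_eq_self_iff.2 h]

theorem IsComp.mapsTo_upPartner {θ : Set (Fin n)} (hθ : IsComp a θ) :
    MapsTo (upPartner a) θ θ := by
  intro i hi
  by_cases h : hasUp a i
  · exact (hθ.2 i hi _).1 (.rel _ _ (.inr (hasLow.lowEdge_lowPartner (a := reflect a) h)))
  · rwa [upPartner_eq_self_iff.2 h]

/-- The free ends of `θ` on the lower side of `Γ(a)`. -/
def lowEnds (a : PElt n) (θ : Set (Fin n)) : Set (Fin n) := {i ∈ θ | ¬ hasLow a i}

/-- The free ends of `θ` on the upper side of `Γ(a)`. -/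
def upEnds (a : PElt n) (θ : Set (Fin n)) : Set (Fin n) := {i ∈ θ | ¬ hasUp a i}

theorem lowEnds_eq_fixed (θ : Set (Fin n)) : lowEnds a θ = {i ∈ θ | lowPartner a i = i} := by
  simp only [lowEnds, lowPartner_eq_self_iff]

theorem upEnds_eq_fixed (θ : Set (Fin n)) : upEnds a θ = {i ∈ θ | upPartner a i = i} :=
  lowEnds_eq_fixed (a := reflect a) θ

section Counting

variable (ha : ∀ x, blockCard a x ≤ 2) {θ : Set (Fin n)}
include ha

theorem two_mul_card_lowEdge_add_ncard_lowEnds (hθ : MapsTo (lowPartner a) θ θ) :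
    2 * Nat.card {p : Fin n × Fin n // p.1 < p.2 ∧ p.1 ∈ θ ∧ p.2 ∈ θ ∧ LowEdge a p.1 p.2} +
      (lowEnds a θ).ncard = θ.ncard := by
  rw [lowEnds_eq_fixed, ← two_mul_ncard_lt_apply_add_ncard_fixed (lowPartner_involutive ha) hθ]
  congr 2
  refine Nat.card_congr ⟨fun p => ⟨p.1.1, p.2.2.1, ?_⟩,
    fun i => ⟨(i, lowPartner a i), i.2.2, i.2.1, hθ i.2.1, ?_⟩, ?_, fun _ => rfl⟩
  · exact ((lowPartner_eq_iff_lowEdge ha p.2.1.ne).2 p.2.2.2.2).symm ▸ p.2.1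
  · exact (lowPartner_eq_iff_lowEdge ha i.2.2.ne).1 rfl
  · rintro ⟨⟨i, j⟩, hlt, -, -, hij⟩
    exact Subtype.ext (Prod.ext rfl ((lowPartner_eq_iff_lowEdge ha hlt.ne).2 hij))

theorem IsComp.two_mul_compEdgeCount_add (hθ : IsComp a θ) :
    2 * compEdgeCount a θ + (lowEnds a θ).ncard + (upEnds a θ).ncard = 2 * θ.ncard := by
  have hlow := two_mul_card_lowEdge_add_ncard_lowEnds ha hθ.mapsTo_lowPartner
  have hup := two_mul_card_lowEdge_add_ncard_lowEnds (blockCard_reflect_le_two ha)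
    hθ.mapsTo_upPartner
  change 2 * Nat.card {p : Fin n × Fin n // p.1 < p.2 ∧ p.1 ∈ θ ∧ p.2 ∈ θ ∧ UpEdge a p.1 p.2} +
    (upEnds a θ).ncard = θ.ncard at hup
  rw [compEdgeCount]
  omega

theorem IsPathComp.ncard_lowEnds_add_ncard_upEnds (hθ : IsPathComp a θ) :
    (lowEnds a θ).ncard + (upEnds a θ).ncard = 2 := by
  obtain ⟨hcomp, i, hi, hfree⟩ := hθ
  have hle := ncard_fixed_add_ncard_fixed_le_two_of_induce hcomp.connected_induce
    (lowPartner_involutive ha) (upPartner_involutive ha) hcomp.mapsTo_lowPartner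
    hcomp.mapsTo_upPartner fun _ _ => partner_eq_of_gedge ha
  rw [← lowEnds_eq_fixed, ← upEnds_eq_fixed] at hle
  have hpos : 0 < (lowEnds a θ).ncard ∨ 0 < (upEnds a θ).ncard := by
    rw [ncard_pos, ncard_pos]
    exact hfree.imp (fun h => ⟨i, hi, h⟩) (fun h => ⟨i, hi, h⟩)
  have := hcomp.two_mul_compEdgeCount_add ha
  omega

theorem IsPathComp.odd_compEdgeCount_iff (hθ : IsPathComp a θ) :
    Odd (compEdgeCount a θ) ↔ (lowEnds a θ).ncard ≠ 1 := by
  have hlow := two_mul_card_lowEdge_add_ncard_lowEnds ha hθ.1.mapsTo_lowPartner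
  have hedges := hθ.1.two_mul_compEdgeCount_add ha
  have hends := hθ.ncard_lowEnds_add_ncard_upEnds ha
  rw [Nat.odd_iff]
  omega

end Counting

/-! ### The square of a partition -/

section Square

/-- The position of a vertex of a partition diagram in its row. -/
def column : PV n → Fin n := Sum.elim id id

/-- The vertex `p` lies in a transversal of `a`. -/
def IsActive (a : PElt n) : PV n → Prop := Sum.elim (activeDown a) (activeUp a)

/-- Transversals of `a` that meet the same component of `Γ(a)` coincide. This is what keeps the
product of `a` with itself from joining distinct blocks of `a`. -/
def IsCoherent (a : PElt n) : Prop :=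
  ∀ p q, IsActive a p → IsActive a q → gconn a (column p) (column q) → a.r p q

/-- The blocks of `a` with a transversal attached to the component of `Γ(a)` containing `j`. -/
def attachedBlocks (a : PElt n) (j : Fin n) : Set (Quotient a) :=
  {c | ∃ p, IsActive a p ∧ gconn a j (column p) ∧ Quotient.mk a p = c}

/-- A labelling of the stacked graph of `a` on itself by sets of blocks of `a`, which is constant
on its components when `a` is coherent. -/
def stackLabel (a : PElt n) : TV n → Set (Quotient a)
  | .inl i => {Quotient.mk a (.inl i)}
  | .inr (.inl j) => attachedBlocks a j
  | .inr (.inr k) => {Quotient.mk a (.inr k)}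

theorem gconn_of_rel_inl {i j : Fin n} (h : a.r (.inl i) (.inl j)) : gconn a i j := by
  rcases eq_or_ne i j with rfl | hij
  exacts [.refl i, .rel _ _ (.inl ⟨hij, h⟩)]

theorem gconn_of_rel_inr {i j : Fin n} (h : a.r (.inr i) (.inr j)) : gconn a i j := by
  rcases eq_or_ne i j with rfl | hij
  exacts [.refl i, .rel _ _ (.inr ⟨hij, h⟩)]

theorem attachedBlocks_eq_of_gconn {i j : Fin n} (h : gconn a i j) :
    attachedBlocks a i = attachedBlocks a j := by
  ext c
  exact exists_congr fun p => and_congr_right' <| and_congr_left'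
    ⟨fun hi => (h.symm _ _).trans _ _ _ hi, fun hj => h.trans _ _ _ hj⟩

theorem IsCoherent.attachedBlocks_eq (ha : IsCoherent a) {p q : PV n} (hp : IsActive a p)
    (hpq : a.r p q) : attachedBlocks a (column p) = {Quotient.mk a q} := by
  ext c
  constructor
  · rintro ⟨r, hr, hconn, rfl⟩
    exact Quotient.sound (a.trans (ha r p hr hp (hconn.symm _ _)) hpq)
  · rintro rfl
    exact ⟨p, hp, .refl _, Quotient.sound hpq⟩

theorem IsCoherent.stackLabel_eq (ha : IsCoherent a) {x y : TV n} (h : stackRel a a x y) :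
    stackLabel a x = stackLabel a y := by
  rcases h with ⟨i | i, j | j, h, rfl, rfl⟩ | ⟨i | i, j | j, h, rfl, rfl⟩
  · exact congrArg singleton (Quotient.sound h)
  · exact (ha.attachedBlocks_eq (p := .inr j) ⟨i, a.symm h⟩ (a.symm h)).symm
  · exact ha.attachedBlocks_eq (p := .inr i) ⟨j, h⟩ h
  · exact attachedBlocks_eq_of_gconn (gconn_of_rel_inr h)
  · exact attachedBlocks_eq_of_gconn (gconn_of_rel_inl h)
  · exact ha.attachedBlocks_eq (p := .inl i) ⟨j, h⟩ h
  · exact (ha.attachedBlocks_eq (p := .inl j) ⟨i, a.symm h⟩ (a.symm h)).symm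
  · exact congrArg singleton (Quotient.sound h)

theorem stackLabel_outEmb (p : PV n) : stackLabel a (outEmb p) = {Quotient.mk a p} := by
  rcases p with i | i <;> rfl

theorem IsCoherent.pmul_self_le (ha : IsCoherent a) : pmul a a ≤ a := by
  intro p q hpq
  have hker : stackSetoid a a ≤ Setoid.ker (stackLabel a) :=
    Setoid.eqvGen_le fun _ _ => ha.stackLabel_eq
  have hlabel : stackLabel a (outEmb p) = stackLabel a (outEmb q) := hker hpq
  rw [stackLabel_outEmb, stackLabel_outEmb, singleton_eq_singleton_iff] at hlabel
  exact Quotient.exact hlabel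

theorem stackSetoid_middle_of_gconn {i j : Fin n} (h : gconn a i j) :
    stackSetoid a a (.inr (.inl i)) (.inr (.inl j)) := by
  have hle : EqvGen.setoid (gedge a) ≤
      Setoid.comap (fun i => .inr (.inl i)) (stackSetoid a a) := by
    refine Setoid.eqvGen_le ?_
    rintro i j (hij | hij)
    · exact .rel _ _ (.inr ⟨.inl i, .inl j, hij.2, rfl, rfl⟩)
    · exact .rel _ _ (.inl ⟨.inr i, .inr j, hij.2, rfl, rfl⟩)
  exact hle h

theorem IsActive.exists_stackSetoid_outEmb {p : PV n} (hp : IsActive a p) :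
    ∃ q, a.r p q ∧ stackSetoid a a (.inr (.inl (column p))) (outEmb q) := by
  rcases p with i | i
  · obtain ⟨j, hj⟩ := hp
    exact ⟨.inr j, hj, .rel _ _ (.inr ⟨.inl i, .inr j, hj, rfl, rfl⟩)⟩
  · obtain ⟨j, hj⟩ := hp
    exact ⟨.inl j, hj, .rel _ _ (.inl ⟨.inr i, .inl j, hj, rfl, rfl⟩)⟩

theorem isCoherent_of_pmul_self_le (ha : pmul a a ≤ a) : IsCoherent a := by
  intro p q hp hq hpq
  obtain ⟨p', hpp', hp'⟩ := hp.exists_stackSetoid_outEmb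
  obtain ⟨q', hqq', hq'⟩ := hq.exists_stackSetoid_outEmb
  have hp'q' : a.r p' q' := ha <| (stackSetoid a a).trans ((stackSetoid a a).symm hp') <|
    (stackSetoid a a).trans (stackSetoid_middle_of_gconn hpq) hq'
  exact a.trans hpp' (a.trans hp'q' (a.symm hqq'))

theorem IsCoherent.pmul_self_of_transversal (ha : IsCoherent a)
    (hup : ∀ j, activeUp a j → ∃ i, gconn a j i ∧ activeDown a i) {i j : Fin n}
    (hij : a.r (.inl i) (.inr j)) : pmul a a (.inl i) (.inr j) := by
  obtain ⟨i', hji', k, hi'k⟩ := hup j ⟨i, a.symm hij⟩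
  have hji'_rel : a.r (.inr j) (.inl i') := ha _ _ ⟨i, a.symm hij⟩ ⟨k, hi'k⟩ hji'
  have top : stackSetoid a a (.inl i) (.inr (.inl j)) :=
    .rel _ _ (.inl ⟨.inl i, .inr j, hij, rfl, rfl⟩)
  have bottom : stackSetoid a a (.inr (.inl i')) (.inr (.inr j)) :=
    .rel _ _ (.inr ⟨.inl i', .inr j, a.symm hji'_rel, rfl, rfl⟩)
  exact (stackSetoid a a).trans top
    ((stackSetoid a a).trans (stackSetoid_middle_of_gconn hji') bottom)

theorem IsCoherent.pmul_self_eq (ha : IsCoherent a)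
    (hup : ∀ j, activeUp a j → ∃ i, gconn a j i ∧ activeDown a i) : pmul a a = a := by
  refine le_antisymm ha.pmul_self_le ?_
  rintro (i | i) (j | j) h
  · exact .rel _ _ (.inl ⟨.inl i, .inl j, h, rfl, rfl⟩)
  · exact ha.pmul_self_of_transversal hup h
  · exact (pmul a a).symm (ha.pmul_self_of_transversal hup (a.symm h))
  · exact .rel _ _ (.inr ⟨.inr i, .inr j, h, rfl, rfl⟩)

end Square

/-! ### Even paths in the Jones monoid -/

section EvenPaths

theorem isComp_setOf_gconn (j : Fin n) : IsComp a {k | gconn a j k} :=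
  ⟨⟨j, .refl j⟩, fun _ hi _ => ⟨hi.trans _ _ _, fun hk => (hi.symm _ _).trans _ _ _ hk⟩⟩

theorem IsCoherent.lowEnds_subsingleton (ha : IsCoherent a) (hJ : a ∈ Jones n)
    {θ : Set (Fin n)} (hθ : IsComp a θ) : (lowEnds a θ).Subsingleton := by
  intro i hi j hj
  by_contra hij
  have hrel : a.r (.inl i) (.inl j) :=
    ha _ _ ((activeDown_iff_not_hasLow_of_mem_Jones hJ).2 hi.2)
      ((activeDown_iff_not_hasLow_of_mem_Jones hJ).2 hj.2) ((hθ.2 i hi.1 j).2 hj.1)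
  exact hi.2 ⟨j, hij, hrel⟩

theorem IsCoherent.upEnds_subsingleton (ha : IsCoherent a) (hJ : a ∈ Jones n)
    {θ : Set (Fin n)} (hθ : IsComp a θ) : (upEnds a θ).Subsingleton := by
  intro i hi j hj
  by_contra hij
  have hrel : a.r (.inr i) (.inr j) :=
    ha _ _ ((activeUp_iff_not_hasUp_of_mem_Jones hJ).2 hi.2)
      ((activeUp_iff_not_hasUp_of_mem_Jones hJ).2 hj.2) ((hθ.2 i hi.1 j).2 hj.1)
  exact hi.2 ⟨j, hij, hrel⟩

theorem IsCoherent.ncard_lowEnds_eq_one (ha : IsCoherent a) (hJ : a ∈ Jones n)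
    {θ : Set (Fin n)} (hθ : IsPathComp a θ) : (lowEnds a θ).ncard = 1 := by
  have hlow := (lowEnds a θ).ncard_le_one_iff_subsingleton.2 (ha.lowEnds_subsingleton hJ hθ.1)
  have hup := (upEnds a θ).ncard_le_one_iff_subsingleton.2 (ha.upEnds_subsingleton hJ hθ.1)
  have := hθ.ncard_lowEnds_add_ncard_upEnds fun x => (hJ.2 x).le
  omega

/-- `i` and `j` are the ends of a path component of `Γ(a)` of even length; the free side of `i` is
the lower one and that of `j` the upper one. -/
def IsEvenPath (a : PElt n) (i j : Fin n) : Prop :=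
  ∃ θ, IsComp a θ ∧ lowEnds a θ = {i} ∧ upEnds a θ = {j}

theorem rightOf_iff_of_gconn (ha : a ∈ Jones n) {θ : Set (Fin n)} (hθ : IsComp a θ)
    {v w : Fin n} (h : gconn a v w) : RightOf θ v ↔ RightOf θ w := by
  have hcard (x : PV n) : blockCard a x ≤ 2 := (ha.2 x).le
  have hle : EqvGen.setoid (gedge a) ≤ Setoid.ker (RightOf θ) := by
    refine Setoid.eqvGen_le fun v w hvw => propext ?_
    rcases partner_eq_of_gedge hcard hvw with rfl | rfl
    · exact ((isNoncrossing_lowPartner_of_mem_Jones ha).rightOf_apply_iff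
        (lowPartner_involutive hcard) hθ.mapsTo_lowPartner v).symm
    · exact ((isNoncrossing_upPartner_of_mem_Jones ha).rightOf_apply_iff
        (upPartner_involutive hcard) hθ.mapsTo_upPartner v).symm
  exact iff_of_eq (hle h)

theorem IsEvenPath.lt_iff_lt (ha : a ∈ Jones n) {i j i' j' : Fin n} (h : IsEvenPath a i j)
    (h' : IsEvenPath a i' j') : i < i' ↔ j < j' := by
  have hcard (x : PV n) : blockCard a x ≤ 2 := (ha.2 x).le
  obtain ⟨θ, hθ, hi, hj⟩ := h
  obtain ⟨θ', hθ', hi', hj'⟩ := h'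
  have hi'_mem : i' ∈ lowEnds a θ' := hi' ▸ rfl
  have hj'_mem : j' ∈ upEnds a θ' := hj' ▸ rfl
  calc i < i' ↔ RightOf θ i' :=
        ((isNoncrossing_lowPartner_of_mem_Jones ha).rightOf_iff_lt (lowPartner_involutive hcard)
          hθ.mapsTo_lowPartner (lowEnds_eq_fixed θ ▸ hi) (lowPartner_eq_self_iff.2 hi'_mem.2)).symm
    _ ↔ RightOf θ j' := rightOf_iff_of_gconn ha hθ ((hθ'.2 _ hi'_mem.1 _).2 hj'_mem.1)
    _ ↔ j < j' :=
        (isNoncrossing_upPartner_of_mem_Jones ha).rightOf_iff_lt (upPartner_involutive hcard)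
          hθ.mapsTo_upPartner (upEnds_eq_fixed θ ▸ hj) (upPartner_eq_self_iff.2 hj'_mem.2)

section

variable (ha : a ∈ Jones n) (heven : ∀ θ, IsPathComp a θ → (lowEnds a θ).ncard = 1)
include ha heven

theorem exists_ends_of_forall_ncard_lowEnds_eq_one {θ : Set (Fin n)} (hθ : IsPathComp a θ) :
    ∃ i j, lowEnds a θ = {i} ∧ upEnds a θ = {j} := by
  have hlow := heven θ hθ
  have hup : (upEnds a θ).ncard = 1 := by
    have := hθ.ncard_lowEnds_add_ncard_upEnds fun x => (ha.2 x).le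
    omega
  obtain ⟨i, hi⟩ := ncard_eq_one.1 hlow
  obtain ⟨j, hj⟩ := ncard_eq_one.1 hup
  exact ⟨i, j, hi, hj⟩

theorem exists_isEvenPath_of_not_hasUp {j : Fin n} (hj : ¬ hasUp a j) :
    ∃ i, gconn a j i ∧ IsEvenPath a i j := by
  have hcomp := isComp_setOf_gconn (a := a) j
  obtain ⟨i, k, hi, hk⟩ := exists_ends_of_forall_ncard_lowEnds_eq_one ha heven
    ⟨hcomp, j, .refl j, Or.inr hj⟩
  obtain rfl : j = k := hk.subset ⟨.refl j, hj⟩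
  exact ⟨i, (hi.superset rfl).1, _, hcomp, hi, hk⟩

theorem IsEvenPath.rel {i j : Fin n} (h : IsEvenPath a i j) : a.r (.inl i) (.inr j) := by
  let R (x y : {j // ¬ hasUp a j}) : Prop :=
    ∃ i, IsEvenPath a i x ∧ a.r (.inl i) (.inr y.1)
  have exists_transversal {i j : Fin n} (h : IsEvenPath a i j) :
      ∃ k : {j // ¬ hasUp a j}, a.r (.inl i) (.inr k.1) := by
    obtain ⟨θ, -, hi, -⟩ := h
    obtain ⟨k, hk⟩ := (activeDown_iff_not_hasLow_of_mem_Jones ha).2 (hi.superset rfl).2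
    exact ⟨⟨k, (activeUp_iff_not_hasUp_of_mem_Jones ha).1 ⟨i, a.symm hk⟩⟩, hk⟩
  have total (x) : ∃ y, R x y := by
    obtain ⟨i, -, hi⟩ := exists_isEvenPath_of_not_hasUp ha heven x.2
    exact (exists_transversal hi).imp fun y hy => ⟨i, hi, hy⟩
  have lt_iff_lt {x y x' y'} (h : R x y) (h' : R x' y') : x < x' ↔ y < y' := by
    obtain ⟨i, hix, hiy⟩ := h
    obtain ⟨i', hix', hiy'⟩ := h'
    exact (hix.lt_iff_lt ha hix').symm.trans (transversal_lt_iff_lt_of_mem_Jones ha hiy hiy')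
  have hj : ¬ hasUp a j := by
    obtain ⟨θ, -, -, hj⟩ := h
    exact (hj.superset rfl).2
  obtain ⟨k, hk⟩ := exists_transversal h
  obtain rfl : ⟨j, hj⟩ = k := eq_of_lt_iff_lt total lt_iff_lt ⟨i, h, hk⟩
  exact hk

theorem isCoherent_of_forall_ncard_lowEnds_eq_one : IsCoherent a := by
  intro p q hp hq hpq
  have hfree : ¬ hasLow a (column p) ∨ ¬ hasUp a (column p) := by
    rcases p with i | i
    exacts [.inl ((activeDown_iff_not_hasLow_of_mem_Jones ha).1 hp),
      .inr ((activeUp_iff_not_hasUp_of_mem_Jones ha).1 hp)]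
  have hcomp := isComp_setOf_gconn (a := a) (column p)
  obtain ⟨i, j, hi, hj⟩ := exists_ends_of_forall_ncard_lowEnds_eq_one ha heven
    ⟨hcomp, column p, .refl _, hfree⟩
  have hij : a.r (.inl i) (.inr j) := IsEvenPath.rel ha heven ⟨_, hcomp, hi, hj⟩
  have rel_end {r : PV n} (hr : IsActive a r) (hpr : gconn a (column p) (column r)) :
      a.r r (.inl i) := by
    rcases r with k | k
    · obtain rfl : k = i :=
        hi.subset ⟨hpr, (activeDown_iff_not_hasLow_of_mem_Jones ha).1 hr⟩
      exact a.refl _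
    · obtain rfl : k = j := hj.subset ⟨hpr, (activeUp_iff_not_hasUp_of_mem_Jones ha).1 hr⟩
      exact a.symm hij
  exact a.trans (rel_end hp (.refl _)) (a.symm (rel_end hq hpq))

end

theorem pmul_self_eq_iff_of_mem_Jones (ha : a ∈ Jones n) :
    pmul a a = a ↔ ∀ θ, IsPathComp a θ → (lowEnds a θ).ncard = 1 := by
  constructor
  · exact fun h θ => (isCoherent_of_pmul_self_le h.le).ncard_lowEnds_eq_one ha
  · intro heven
    refine (isCoherent_of_forall_ncard_lowEnds_eq_one ha heven).pmul_self_eq fun j hj => ?_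
    obtain ⟨i, hji, θ, -, hi, -⟩ := exists_isEvenPath_of_not_hasUp ha heven
      ((activeUp_iff_not_hasUp_of_mem_Jones ha).1 hj)
    exact ⟨i, hji, (activeDown_iff_not_hasLow_of_mem_Jones ha).2 (hi.superset rfl).2⟩

end EvenPaths

end Diagrams

/-- Corollary 2.2. Let `n ≥ 1` and `α ∈ J_n`. Then `α` is idempotent
if and only if the interface graph `Γ(α)` has no path component of odd length. -/
theorem jones_idempotent_iff (n : ℕ) (hn : 1 ≤ n) (a : PElt n) (ha : a ∈ Jones n) :
    pmul a a = a ↔ ¬ ∃ θ : Set (Fin n), IsPathComp a θ ∧ Odd (compEdgeCount a θ) := by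
  rw [pmul_self_eq_iff_of_mem_Jones ha]
  push Not
  refine forall₂_congr fun θ hθ => ?_
  rw [hθ.odd_compEdgeCount_iff fun x => (ha.2 x).le, not_not]
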